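/- arXiv:1810.13057 — 3 statements merged into one kernel-verified Lean document; each statement's English description precedes it below -/
import Mathlib

section
/- Let u : ℝ³ → ℝ³ be twice continuously differentiable on a neighborhood of the half-space ℝ³₊ and vanish identically on the boundary plane {x ∈ ℝ³ : x₃ = 0}. Then for every boundary point x, ∂₃[(u·∇)u](x) = (∂₃u₃(x))·∂₃u(x) (as vectors in ℝ³). If in addition div u = 0 on ℝ³₊, then ∂₃[(u·∇)u](x) = 0 for every boundary point x. -/
/-- Partial derivative in the `j`-th coordinate direction of a function on `ℝ³`. -/
noncomputable def pd3 {F : Type*} [NormedAddCommGroup F] [NormedSpace ℝ F]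
    (j : Fin 3) (g : (Fin 3 → ℝ) → F) (x : Fin 3 → ℝ) : F :=
  fderiv ℝ g x (Pi.single j 1)

/-- The convective term `(u·∇)u`, defined componentwise by `((u·∇)u)ᵢ = Σⱼ uⱼ ∂ⱼuᵢ`. -/
noncomputable def convTerm (u : (Fin 3 → ℝ) → (Fin 3 → ℝ)) (x : Fin 3 → ℝ) : Fin 3 → ℝ :=
  fun i => ∑ j : Fin 3, u x j * pd3 j u x i

/-!
Where `u` vanishes, differentiating `(u·∇)u = Du(u)` only hits the factor `u`, so the derivative of
the convective term is `Du ∘ Du`; the second derivatives of `u` never enter. If `u` vanishes on a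
hyperplane, `Du` has rank at most one there, and a rank-one operator satisfies
`Du ∘ Du = tr(Du) Du`, where `tr(Du) = div u`.
-/

open Filter Topology Asymptotics

section RankOne

variable {R M N : Type*} [CommRing R] [AddCommGroup M] [Module R M] [AddCommGroup N] [Module R N]
  {ℓ : Module.Dual R M} {e : M}

theorem eq_smulRight_of_ker_le_ker {L : M →ₗ[R] N} (hker : ℓ.ker ≤ L.ker) (he : ℓ e = 1) :
    L = ℓ.smulRight (L e) := by
  ext v
  have hv : v - ℓ v • e ∈ ℓ.ker := by simp [he]
  simpa [sub_eq_zero] using hker hv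

theorem trace_eq_apply_of_ker_le_ker [Module.Free R M] [Module.Finite R M] {L : M →ₗ[R] M}
    (hker : ℓ.ker ≤ L.ker) (he : ℓ e = 1) : LinearMap.trace R M L = ℓ (L e) := by
  conv_lhs => rw [eq_smulRight_of_ker_le_ker hker he, LinearMap.trace_smulRight]

end RankOne

section Calculus

variable {𝕜 E F G : Type*} [NontriviallyNormedField 𝕜] [NormedAddCommGroup E] [NormedSpace 𝕜 E]
  [NormedAddCommGroup F] [NormedSpace 𝕜 F] [NormedAddCommGroup G] [NormedSpace 𝕜 G] {x : E}

theorem hasFDerivAt_clm_apply_of_eq_zero {c : E → F →L[𝕜] G} {f : E → F} {f' : E →L[𝕜] F}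
    (hc : ContinuousAt c x) (hf : HasFDerivAt f f' x) (hfx : f x = 0) :
    HasFDerivAt (fun y => c y (f y)) (c x ∘L f') x := by
  have hf_bigO : f =O[𝓝 x] (· - x) := by simpa [hfx] using hf.isBigO_sub
  have hc_littleO : (fun y => c y - c x) =o[𝓝 x] (fun _ => (1 : ℝ)) :=
    (isLittleO_one_iff ℝ).2 (tendsto_sub_nhds_zero_iff.2 hc)
  have h_variation : (fun y => (c y - c x) (f y)) =o[𝓝 x] (· - x) := by
    refine IsBigO.trans_isLittleO (g := fun y => ‖c y - c x‖ * ‖f y‖) ?_ ?_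
    · exact .of_norm_le fun y => (c y - c x).le_opNorm (f y)
    · simpa using (hc_littleO.norm_left.mul_isBigO hf_bigO.norm_norm).norm_right
  have h_frozen : HasFDerivAt (fun y => c x (f y)) (c x ∘L f') x :=
    (c x).hasFDerivAt.comp x hf
  refine .of_isLittleO ((h_variation.add h_frozen.isLittleO).congr_left fun y => ?_)
  simp [hfx]

theorem ker_le_ker_of_hasFDerivAt_of_eq_zero_on_level {u : E → F} {u' : E →L[𝕜] F}
    {ℓ : Module.Dual 𝕜 E} (hu : HasFDerivAt u u' x)
    (hzero : ∀ᶠ y in 𝓝 x, ℓ y = ℓ x → u y = 0) :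
    ℓ.ker ≤ (u' : E →ₗ[𝕜] F).ker := by
  intro v hv
  have h_line : Tendsto (fun t : 𝕜 => x + t • v) (𝓝 0) (𝓝 x) :=
    Continuous.tendsto' (by fun_prop) _ _ (by simp)
  have h_vanish : (fun t : 𝕜 => u (x + t • v)) =ᶠ[𝓝 0] fun _ => 0 := by
    filter_upwards [h_line.eventually hzero] with t ht
    exact ht (by simp [LinearMap.mem_ker.1 hv])
  exact (hu.hasLineDerivAt v).unique ((hasDerivAt_const 0 0).congr_of_eventuallyEq h_vanish)

end Calculus

section Convection

variable (𝕜 : Type*) {E : Type*} [NontriviallyNormedField 𝕜] [NormedAddCommGroup E]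
  [NormedSpace 𝕜 E]

/-- The convective term `(u·∇)u` of a vector field on a normed space, in coordinate-free form: the
derivative of `u` at `x` in the direction `u x`. -/
noncomputable def convection (u : E → E) (x : E) : E :=
  fderiv 𝕜 u x (u x)

/-- The divergence of a vector field on a normed space, in coordinate-free form: the trace of its
derivative. As `LinearMap.trace` is, it is zero by convention in infinite dimension. -/
noncomputable def divergence (u : E → E) (x : E) : 𝕜 :=
  LinearMap.trace 𝕜 E (fderiv 𝕜 u x)

variable {𝕜} {u : E → E} {x e : E} {ℓ : Module.Dual 𝕜 E}

theorem hasFDerivAt_convection_of_eq_zero (hu : ContDiffAt 𝕜 1 u x) (hux : u x = 0) :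
    HasFDerivAt (convection 𝕜 u) (fderiv 𝕜 u x ∘L fderiv 𝕜 u x) x :=
  hasFDerivAt_clm_apply_of_eq_zero (hu.continuousAt_fderiv one_ne_zero)
    (hu.differentiableAt one_ne_zero).hasFDerivAt hux

theorem hasFDerivAt_convection_of_eq_zero_on_level (hu : ContDiffAt 𝕜 1 u x)
    (hzero : ∀ᶠ y in 𝓝 x, ℓ y = ℓ x → u y = 0) (he : ℓ e = 1) :
    HasFDerivAt (convection 𝕜 u) (ℓ (fderiv 𝕜 u x e) • fderiv 𝕜 u x) x := by
  have hker := ker_le_ker_of_hasFDerivAt_of_eq_zero_on_level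
    (hu.differentiableAt one_ne_zero).hasFDerivAt hzero
  have h_rank_one (v : E) : fderiv 𝕜 u x v = ℓ v • fderiv 𝕜 u x e :=
    LinearMap.congr_fun (eq_smulRight_of_ker_le_ker hker he) v
  convert hasFDerivAt_convection_of_eq_zero hu (hzero.self_of_nhds rfl) using 1
  ext v
  calc ℓ (fderiv 𝕜 u x e) • fderiv 𝕜 u x v
      = ℓ v • ℓ (fderiv 𝕜 u x e) • fderiv 𝕜 u x e := by rw [h_rank_one v, smul_comm]
    _ = ℓ v • fderiv 𝕜 u x (fderiv 𝕜 u x e) := by rw [← h_rank_one (fderiv 𝕜 u x e)]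
    _ = fderiv 𝕜 u x (fderiv 𝕜 u x v) := by rw [h_rank_one v, map_smul]

theorem divergence_eq_of_eq_zero_on_level [FiniteDimensional 𝕜 E] (hu : DifferentiableAt 𝕜 u x)
    (hzero : ∀ᶠ y in 𝓝 x, ℓ y = ℓ x → u y = 0) (he : ℓ e = 1) :
    divergence 𝕜 u x = ℓ (fderiv 𝕜 u x e) :=
  have hker := ker_le_ker_of_hasFDerivAt_of_eq_zero_on_level hu.hasFDerivAt hzero
  trace_eq_apply_of_ker_le_ker hker he

theorem stmt1_general [FiniteDimensional 𝕜 E] (hu : ContDiffAt 𝕜 1 u x)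
    (hzero : ∀ᶠ y in 𝓝 x, ℓ y = ℓ x → u y = 0) (he : ℓ e = 1) :
    HasFDerivAt (convection 𝕜 u) (ℓ (fderiv 𝕜 u x e) • fderiv 𝕜 u x) x ∧
      (divergence 𝕜 u x = 0 → HasFDerivAt (convection 𝕜 u) (0 : E →L[𝕜] E) x) := by
  have h_conv := hasFDerivAt_convection_of_eq_zero_on_level hu hzero he
  refine ⟨h_conv, fun h_div => ?_⟩
  rwa [← divergence_eq_of_eq_zero_on_level (hu.differentiableAt one_ne_zero) hzero he, h_div,
    zero_smul] at h_conv

end Convection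

section Coordinates

variable (u : (Fin 3 → ℝ) → (Fin 3 → ℝ))

theorem convTerm_eq_convection : convTerm u = convection ℝ u := by
  ext x i
  have h_expand : fderiv ℝ u x (u x) = ∑ j, u x j • pd3 j u x := by
    conv_lhs => rw [pi_eq_sum_univ' (u x), map_sum]
    simp only [map_smul, pd3]
  simp [convTerm, convection, h_expand]

theorem divergence_eq_sum_pd3 (x : Fin 3 → ℝ) : divergence ℝ u x = ∑ i, pd3 i u x i := by
  simp [divergence, pd3, LinearMap.trace_eq_matrix_trace ℝ (Pi.basisFun ℝ (Fin 3)), Matrix.trace]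

end Coordinates

/-- If `u : ℝ³ → ℝ³` is `C²` on a neighborhood of the half-space
`ℝ³₊ = {x : x₃ ≥ 0}` and vanishes on the boundary plane `{x₃ = 0}`, then at every
boundary point `x`, `∂₃[(u·∇)u](x) = (∂₃u₃(x)) • ∂₃u(x)`.  If in addition `div u = 0`
on `ℝ³₊`, then `∂₃[(u·∇)u](x) = 0` at every boundary point. -/
theorem stmt1 (u : (Fin 3 → ℝ) → (Fin 3 → ℝ))
    (s : Set (Fin 3 → ℝ)) (hs_open : IsOpen s)
    (hs_half : {x : Fin 3 → ℝ | 0 ≤ x 2} ⊆ s)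
    (hu : ContDiffOn ℝ 2 u s)
    (hbd : ∀ x : Fin 3 → ℝ, x 2 = 0 → u x = 0) :
    (∀ x : Fin 3 → ℝ, x 2 = 0 →
      pd3 2 (convTerm u) x = (pd3 2 u x 2) • (pd3 2 u x)) ∧
    ((∀ x : Fin 3 → ℝ, 0 ≤ x 2 → ∑ i : Fin 3, pd3 i u x i = 0) →
      ∀ x : Fin 3 → ℝ, x 2 = 0 → pd3 2 (convTerm u) x = 0) := by
  have h_boundary (x : Fin 3 → ℝ) (hx : x 2 = 0) :=
    stmt1_general (ℓ := .proj 2) (e := Pi.single 2 1)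
      ((hu.contDiffAt (hs_open.mem_nhds (hs_half hx.ge))).of_le one_le_two)
      (.of_forall fun y hy => hbd y (hy.trans hx)) (by simp)
  simp only [← divergence_eq_sum_pd3, convTerm_eq_convection]
  exact ⟨fun x hx => DFunLike.congr_fun (h_boundary x hx).1.fderiv (Pi.single 2 1),
    fun h_div x hx =>
      DFunLike.congr_fun ((h_boundary x hx).2 (h_div x hx.ge)).fderiv (Pi.single 2 1)⟩
end

section
/- Let v : ℝ³ → ℝ³ be continuously differentiable. Then at every (z,r̄,θ̄) with f(r̄,θ̄) ≠ 0, the Euclidean divergence of v satisfies (div v)(T(z,r̄,θ̄)) = (1/f(r̄,θ̄))·[∂_z(v_z·f) + ∂_r̄(v_r̄·f) + ∂_θ̄ v_θ̄](z,r̄,θ̄), where v_z, v_r̄, v_θ̄ are the frame components of v in the coordinates given by T. -/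
/-- Partial derivative in the `j`-th coordinate direction on Euclidean `ℝ³`. -/
noncomputable def pdE {F : Type*} [NormedAddCommGroup F] [NormedSpace ℝ F]
    (j : Fin 3) (g : EuclideanSpace ℝ (Fin 3) → F) (x : EuclideanSpace ℝ (Fin 3)) : F :=
  fderiv ℝ g x (EuclideanSpace.single j 1)

/-- Euclidean divergence `div v = ∂₁v₁ + ∂₂v₂ + ∂₃v₃`. -/
noncomputable def div3 (v : EuclideanSpace ℝ (Fin 3) → EuclideanSpace ℝ (Fin 3))
    (x : EuclideanSpace ℝ (Fin 3)) : ℝ :=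
  ∑ i : Fin 3, pdE i (fun y => v y i) x

/-- Curvature `κ(θ̄) = |φ''(θ̄)|` of a unit-speed plane curve. -/
noncomputable def curveKappa (φ : ℝ → EuclideanSpace ℝ (Fin 2)) (θ : ℝ) : ℝ :=
  ‖deriv (deriv φ) θ‖

/-- Unit normal `N(θ̄) = φ''(θ̄)/|φ''(θ̄)|` of a unit-speed plane curve. -/
noncomputable def curveN (φ : ℝ → EuclideanSpace ℝ (Fin 2)) (θ : ℝ) :
    EuclideanSpace ℝ (Fin 2) :=
  ‖deriv (deriv φ) θ‖⁻¹ • deriv (deriv φ) θ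

/-- The factor `f(r̄,θ̄) = 1 − r̄·κ(θ̄)`. -/
noncomputable def fFactor (φ : ℝ → EuclideanSpace ℝ (Fin 2)) (r θ : ℝ) : ℝ :=
  1 - r * curveKappa φ θ

/-- Embedding `ℝ² ∋ v ↦ (v, 0) ∈ ℝ³`. -/
noncomputable def emb23 (v : EuclideanSpace ℝ (Fin 2)) : EuclideanSpace ℝ (Fin 3) :=
  !₂[v 0, v 1, 0]

/-- The coordinate map `T(z,r̄,θ̄) = (φ(θ̄) + r̄·N(θ̄), z)`. -/
noncomputable def Tmap (φ : ℝ → EuclideanSpace ℝ (Fin 2)) (z r θ : ℝ) :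
    EuclideanSpace ℝ (Fin 3) :=
  !₂[(φ θ + r • curveN φ θ) 0, (φ θ + r • curveN φ θ) 1, z]

/-- Frame component `v_z(z,r̄,θ̄) = v(T(z,r̄,θ̄))·(0,0,1)`. -/
noncomputable def vzComp (φ : ℝ → EuclideanSpace ℝ (Fin 2))
    (v : EuclideanSpace ℝ (Fin 3) → EuclideanSpace ℝ (Fin 3)) (z r θ : ℝ) : ℝ :=
  inner ℝ (v (Tmap φ z r θ)) (EuclideanSpace.single 2 (1:ℝ))

/-- Frame component `v_r̄(z,r̄,θ̄) = v(T(z,r̄,θ̄))·(N(θ̄),0)`. -/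
noncomputable def vrComp (φ : ℝ → EuclideanSpace ℝ (Fin 2))
    (v : EuclideanSpace ℝ (Fin 3) → EuclideanSpace ℝ (Fin 3)) (z r θ : ℝ) : ℝ :=
  inner ℝ (v (Tmap φ z r θ)) (emb23 (curveN φ θ))

/-- Frame component `v_θ̄(z,r̄,θ̄) = v(T(z,r̄,θ̄))·(φ'(θ̄),0)`. -/
noncomputable def vθComp (φ : ℝ → EuclideanSpace ℝ (Fin 2))
    (v : EuclideanSpace ℝ (Fin 3) → EuclideanSpace ℝ (Fin 3)) (z r θ : ℝ) : ℝ :=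
  inner ℝ (v (Tmap φ z r θ)) (emb23 (deriv φ θ))

/-- `∂_z` for a function of `(z, r̄, θ̄)`. -/
noncomputable def Dz (g : ℝ → ℝ → ℝ → ℝ) (z r θ : ℝ) : ℝ := deriv (fun s => g s r θ) z

/-- `∂_r̄` for a function of `(z, r̄, θ̄)`. -/
noncomputable def Dr (g : ℝ → ℝ → ℝ → ℝ) (z r θ : ℝ) : ℝ := deriv (fun s => g z s θ) r

/-- `∂_θ̄` for a function of `(z, r̄, θ̄)`. -/
noncomputable def Dθ (g : ℝ → ℝ → ℝ → ℝ) (z r θ : ℝ) : ℝ := deriv (fun s => g z r s) θ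

/-! In an orthonormal frame `e`, the divergence of `v` is the trace `∑ ⟪A eᵢ, eᵢ⟫` of its
differential `A`. Take the frame `(0, 0, 1)`, `(T, 0)`, `(N, 0)` with `T = φ'`. By the Frenet
equations `T' = κ N` and `N' = -κ T`, the coordinate map has the partial derivatives
`∂_z = (0, 0, 1)`, `∂_r̄ = (N, 0)` and `∂_θ̄ = f (T, 0)`. The product rule thus produces `f` times
the trace, together with `-κ v_r̄` from `∂_r̄ f` and `κ v_r̄` from `T'`, which cancel.

The normal is, up to a locally constant sign, the tangent rotated by a right angle; this gives the
second Frenet equation without differentiating `φ''`. -/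

section General

open Filter Module
open scoped Topology InnerProductSpace

theorem eventually_eq_of_eventually_abs_eq {X : Type*} [TopologicalSpace X] {g : X → ℝ} {x : X}
    (hg : ContinuousAt g x) (habs : ∀ᶠ y in 𝓝 x, |g y| = |g x|) : ∀ᶠ y in 𝓝 x, g y = g x := by
  rcases lt_trichotomy (g x) 0 with hneg | hzero | hpos
  · filter_upwards [habs, hg.eventually_lt_const hneg] with y hy hy_neg
    rwa [abs_of_neg hy_neg, abs_of_neg hneg, neg_inj] at hy
  · filter_upwards [habs] with y hy
    rwa [hzero, abs_zero, abs_eq_zero, ← hzero] at hy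
  · filter_upwards [habs, hg.eventually_const_lt hpos] with y hy hy_pos
    rwa [abs_of_pos hy_pos, abs_of_pos hpos] at hy

theorem trace_eq_sum_inner_of_orthonormal {𝕜 E ι : Type*} [RCLike 𝕜] [NormedAddCommGroup E]
    [InnerProductSpace 𝕜 E] [FiniteDimensional 𝕜 E] [Fintype ι] {e : ι → E}
    (he : Orthonormal 𝕜 e) (hcard : Fintype.card ι = finrank 𝕜 E) (A : E →ₗ[𝕜] E) :
    A.trace 𝕜 E = ∑ i, ⟪e i, A (e i)⟫_𝕜 := by
  have hspan : ⊤ ≤ Submodule.span 𝕜 (Set.range e) :=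
    (he.linearIndependent.span_eq_top_of_card_eq_finrank' hcard).ge
  simpa only [OrthonormalBasis.coe_mk] using A.trace_eq_sum_inner (OrthonormalBasis.mk he hspan)

variable {E : Type*} [NormedAddCommGroup E] [InnerProductSpace ℝ E]

theorem inner_eq_zero_of_hasDerivAt_of_norm_eventually_const {u : ℝ → E} {u' : E} {t c : ℝ}
    (hu : HasDerivAt u u' t) (hnorm : ∀ᶠ s in 𝓝 t, ‖u s‖ = c) : ⟪u t, u'⟫_ℝ = 0 := by
  have hconst : (fun s ↦ ‖u s‖ ^ 2) =ᶠ[𝓝 t] fun _ ↦ c ^ 2 := by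
    filter_upwards [hnorm] with s hs
    rw [hs]
  have hderiv : 2 * ⟪u t, u'⟫_ℝ = 0 :=
    hu.norm_sq.unique ((hasDerivAt_const t (c ^ 2)).congr_of_eventuallyEq hconst)
  linarith

theorem hasDerivAt_inner_vectorField_comp {F : Type*} [NormedAddCommGroup F] [NormedSpace ℝ F]
    {v : F → E} {γ : ℝ → F} {e : ℝ → E} {γ' : F} {e' : E} {t : ℝ}
    (hγ : HasDerivAt γ γ' t) (he : HasDerivAt e e' t) (hv : DifferentiableAt ℝ v (γ t)) :
    HasDerivAt (fun s ↦ ⟪v (γ s), e s⟫_ℝ)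
      (⟪v (γ t), e'⟫_ℝ + ⟪fderiv ℝ v (γ t) γ', e t⟫_ℝ) t :=
  (hv.hasFDerivAt.comp_hasDerivAt t hγ).inner ℝ he

variable [Fact (finrank ℝ E = 2)]

theorem abs_areaForm_eq_one_of_orthonormal (o : Orientation ℝ E (Fin 2)) {x y : E}
    (hxy : Orthonormal ℝ ![x, y]) : |o.areaForm x y| = 1 := by
  have hx : ‖x‖ = 1 := hxy.1 0
  have hy : ‖y‖ = 1 := hxy.1 1
  have hperp : ⟪x, y⟫_ℝ = 0 := hxy.2 Fin.zero_ne_one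
  rw [o.abs_areaForm_of_orthogonal hperp, hx, hy, one_mul]

theorem eq_areaForm_smul_rightAngleRotation_of_orthonormal (o : Orientation ℝ E (Fin 2))
    {x y : E} (hxy : Orthonormal ℝ ![x, y]) : y = o.areaForm x y • o.rightAngleRotation x := by
  have hx : ‖x‖ = 1 := hxy.1 0
  have hperp : ⟪x, y⟫_ℝ = 0 := hxy.2 Fin.zero_ne_one
  refine ext_inner_right ℝ fun w ↦ ?_
  have hw : o.areaForm x y * o.areaForm x w = ⟪y, w⟫_ℝ := by
    simpa [hx, hperp] using o.inner_mul_inner_add_areaForm_mul_areaForm x y w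
  rw [real_inner_smul_left, o.inner_rightAngleRotation_left, hw]

theorem eventuallyEq_areaForm_smul_rightAngleRotation (o : Orientation ℝ E (Fin 2))
    {X : Type*} [TopologicalSpace X] {T N : X → E} {x : X}
    (hTN : ∀ᶠ y in 𝓝 x, Orthonormal ℝ ![T y, N y]) (hT : ContinuousAt T x)
    (hN : ContinuousAt N x) :
    N =ᶠ[𝓝 x] fun y ↦ o.areaForm (T x) (N x) • o.rightAngleRotation (T y) := by
  have habs : ∀ᶠ y in 𝓝 x, |o.areaForm (T y) (N y)| = 1 :=
    hTN.mono fun y hy ↦ abs_areaForm_eq_one_of_orthonormal o hy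
  have hcont : ContinuousAt (fun y ↦ o.areaForm (T y) (N y)) x := by
    simp only [← o.inner_rightAngleRotation_left]
    exact (o.rightAngleRotation.continuous.continuousAt.comp hT).inner hN
  have hsign : ∀ᶠ y in 𝓝 x, o.areaForm (T y) (N y) = o.areaForm (T x) (N x) :=
    eventually_eq_of_eventually_abs_eq hcont <|
      habs.mono fun y hy ↦ hy.trans habs.self_of_nhds.symm
  filter_upwards [hTN, hsign] with y hy hsign_y
  rw [← hsign_y, ← eq_areaForm_smul_rightAngleRotation_of_orthonormal o hy]

theorem hasDerivAt_normal_of_hasDerivAt_tangent {T N : ℝ → E} {t k : ℝ}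
    (hTN : ∀ᶠ s in 𝓝 t, Orthonormal ℝ ![T s, N s]) (hT : HasDerivAt T (k • N t) t)
    (hN : ContinuousAt N t) : HasDerivAt N (-k • T t) t := by
  have : FiniteDimensional ℝ E := .of_fact_finrank_eq_two
  let o : Orientation ℝ E (Fin 2) := (finBasisOfFinrankEq ℝ E Fact.out).orientation
  set ε := o.areaForm (T t) (N t)
  have hrot : N =ᶠ[𝓝 t] fun s ↦ ε • o.rightAngleRotation (T s) :=
    eventuallyEq_areaForm_smul_rightAngleRotation o hTN hT.continuousAt hN
  have hε : ε * ε = 1 := by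
    rw [← abs_mul_abs_self, abs_areaForm_eq_one_of_orthonormal o hTN.self_of_nhds, one_mul]
  have hrot_deriv : ε • o.rightAngleRotation (k • N t) = -k • T t := by
    rw [hrot.self_of_nhds, map_smul, map_smul, o.rightAngleRotation_rightAngleRotation,
      smul_comm k ε, smul_smul, hε, one_smul, smul_neg, neg_smul]
  rw [← hrot_deriv]
  exact ((o.rightAngleRotation.toContinuousLinearEquiv.hasFDerivAt.comp_hasDerivAt t
    hT).const_smul ε).congr_of_eventuallyEq hrot

end General

section Curve

open Filter
open scoped Topology InnerProductSpace

variable {φ : ℝ → EuclideanSpace ℝ (Fin 2)} {θ : ℝ}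

theorem curveKappa_smul_curveN (φ : ℝ → EuclideanSpace ℝ (Fin 2)) (θ : ℝ) :
    curveKappa φ θ • curveN φ θ = deriv (deriv φ) θ := by
  rcases eq_or_ne (deriv (deriv φ) θ) 0 with hzero | hne
  · simp only [curveN, hzero, smul_zero]
  · exact smul_inv_smul₀ (norm_ne_zero_iff.mpr hne) _

theorem orthonormal_deriv_curveN (hφ : DifferentiableAt ℝ (deriv φ) θ)
    (hunit : ∀ᶠ s in 𝓝 θ, ‖deriv φ s‖ = 1) (hcurv : deriv (deriv φ) θ ≠ 0) :
    Orthonormal ℝ ![deriv φ θ, curveN φ θ] := by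
  have hnormal : ‖curveN φ θ‖ = 1 := norm_smul_inv_norm (𝕜 := ℝ) hcurv
  have hperp : ⟪deriv φ θ, curveN φ θ⟫_ℝ = 0 := by
    rw [curveN, real_inner_smul_right,
      inner_eq_zero_of_hasDerivAt_of_norm_eventually_const hφ.hasDerivAt hunit, mul_zero]
  simp [orthonormal_vecCons_iff, hunit.self_of_nhds, hnormal, hperp]

theorem continuousAt_curveN (hφ : ContinuousAt (deriv (deriv φ)) θ)
    (hcurv : deriv (deriv φ) θ ≠ 0) : ContinuousAt (curveN φ) θ :=
  (hφ.norm.inv₀ (norm_ne_zero_iff.mpr hcurv)).smul hφ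

theorem hasDerivAt_deriv_curve (hφ : ContDiffAt ℝ 2 φ θ) :
    HasDerivAt (deriv φ) (curveKappa φ θ • curveN φ θ) θ := by
  rw [curveKappa_smul_curveN]
  exact ((hφ.derivWithin (m := 1) (by norm_num)).differentiableAt one_ne_zero).hasDerivAt

theorem hasDerivAt_curveN (hφ : ContDiffAt ℝ 2 φ θ) (hunit : ∀ᶠ s in 𝓝 θ, ‖deriv φ s‖ = 1)
    (hcurv : deriv (deriv φ) θ ≠ 0) : HasDerivAt (curveN φ) (-curveKappa φ θ • deriv φ θ) θ := by
  have hcont : ContinuousAt (deriv (deriv φ)) θ :=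
    ((hφ.derivWithin (m := 1) (by norm_num)).derivWithin (m := 0) (by norm_num)).continuousAt
  have hframe : ∀ᶠ s in 𝓝 θ, Orthonormal ℝ ![deriv φ s, curveN φ s] := by
    filter_upwards [hφ.eventually (by simp), hunit.eventually_nhds, hcont.eventually_ne hcurv]
      with s hφs hunit_s hcurv_s
    exact orthonormal_deriv_curveN (hasDerivAt_deriv_curve hφs).differentiableAt hunit_s hcurv_s
  have : Fact (Module.finrank ℝ (EuclideanSpace ℝ (Fin 2)) = 2) := ⟨finrank_euclideanSpace_fin⟩
  exact hasDerivAt_normal_of_hasDerivAt_tangent hframe (hasDerivAt_deriv_curve hφ)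
    (continuousAt_curveN hcont hcurv)

end Curve

section Divergence

open scoped InnerProductSpace

variable {v : EuclideanSpace ℝ (Fin 3) → EuclideanSpace ℝ (Fin 3)}

theorem div3_eq_trace {x : EuclideanSpace ℝ (Fin 3)} (hv : DifferentiableAt ℝ v x) :
    div3 v x = LinearMap.trace ℝ (EuclideanSpace ℝ (Fin 3)) (fderiv ℝ v x) := by
  have hcoord (i : Fin 3) :
      pdE i (fun y ↦ v y i) x = fderiv ℝ v x (EuclideanSpace.single i 1) i := by
    have h : HasFDerivAt (fun y ↦ v y i) ((EuclideanSpace.proj i).comp (fderiv ℝ v x)) x :=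
      (EuclideanSpace.proj (𝕜 := ℝ) i).hasFDerivAt.comp x hv.hasFDerivAt
    rw [pdE, h.fderiv]
    rfl
  simp [div3, hcoord, LinearMap.trace_eq_sum_inner _ (EuclideanSpace.basisFun (Fin 3) ℝ),
    EuclideanSpace.inner_single_left]

theorem div3_eq_sum_inner_of_orthonormal {x : EuclideanSpace ℝ (Fin 3)}
    (hv : DifferentiableAt ℝ v x) {e : Fin 3 → EuclideanSpace ℝ (Fin 3)}
    (he : Orthonormal ℝ e) : div3 v x = ∑ i, ⟪fderiv ℝ v x (e i), e i⟫_ℝ := by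
  rw [div3_eq_trace hv, trace_eq_sum_inner_of_orthonormal he (by simp)]
  simp only [ContinuousLinearMap.coe_coe, real_inner_comm]

end Divergence

section Coordinates

open Filter
open scoped Topology InnerProductSpace

/-- The horizontal embedding `emb23` of `ℝ²` into `ℝ³`, as a linear isometry: it transports
derivatives and orthonormal frames from the plane to space. -/
noncomputable def emb23LinearIsometry :
    EuclideanSpace ℝ (Fin 2) →ₗᵢ[ℝ] EuclideanSpace ℝ (Fin 3) where
  toFun := emb23
  map_add' x y := by ext i; fin_cases i <;> simp [emb23]
  map_smul' c x := by ext i; fin_cases i <;> simp [emb23]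
  norm_map' x := by simp [EuclideanSpace.norm_eq, Fin.sum_univ_succ, emb23]

theorem emb23_smul (c : ℝ) (x : EuclideanSpace ℝ (Fin 2)) : emb23 (c • x) = c • emb23 x :=
  emb23LinearIsometry.map_smul c x

theorem hasDerivAt_emb23_comp {u : ℝ → EuclideanSpace ℝ (Fin 2)}
    {u' : EuclideanSpace ℝ (Fin 2)} {t : ℝ} (hu : HasDerivAt u u' t) :
    HasDerivAt (fun s ↦ emb23 (u s)) (emb23 u') t :=
  emb23LinearIsometry.toContinuousLinearMap.hasFDerivAt.comp_hasDerivAt t hu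

theorem orthonormal_single_emb23 {a b : EuclideanSpace ℝ (Fin 2)}
    (hab : Orthonormal ℝ ![a, b]) :
    Orthonormal ℝ ![EuclideanSpace.single 2 1, emb23 a, emb23 b] := by
  have hhorizontal : Orthonormal ℝ ![emb23 a, emb23 b] := by
    convert hab.comp_linearIsometry emb23LinearIsometry using 1
    ext i : 1
    fin_cases i <;> rfl
  refine orthonormal_vecCons_iff.mpr ⟨by simp, fun i ↦ ?_, hhorizontal⟩
  fin_cases i <;> simp [emb23, EuclideanSpace.inner_single_left]

variable {φ : ℝ → EuclideanSpace ℝ (Fin 2)} {z r θ : ℝ}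

theorem Tmap_eq_emb23_add_smul (φ : ℝ → EuclideanSpace ℝ (Fin 2)) (z r θ : ℝ) :
    Tmap φ z r θ = emb23 (φ θ + r • curveN φ θ) + z • EuclideanSpace.single 2 1 := by
  ext i
  fin_cases i <;> simp [emb23, Tmap]

theorem hasDerivAt_Tmap_z :
    HasDerivAt (fun s ↦ Tmap φ s r θ) (EuclideanSpace.single 2 1) z := by
  simp only [Tmap_eq_emb23_add_smul]
  simpa only [one_smul] using
    ((hasDerivAt_id' z).smul_const (EuclideanSpace.single (2 : Fin 3) (1 : ℝ))).const_add _

theorem hasDerivAt_Tmap_r : HasDerivAt (fun s ↦ Tmap φ z s θ) (emb23 (curveN φ θ)) r := by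
  simp only [Tmap_eq_emb23_add_smul]
  have hplane : HasDerivAt (fun s : ℝ ↦ φ θ + s • curveN φ θ) (curveN φ θ) r := by
    simpa only [one_smul] using ((hasDerivAt_id' r).smul_const (curveN φ θ)).const_add (φ θ)
  exact (hasDerivAt_emb23_comp hplane).add_const _

theorem hasDerivAt_Tmap_θ (hφ : DifferentiableAt ℝ φ θ)
    (hN : HasDerivAt (curveN φ) (-curveKappa φ θ • deriv φ θ) θ) :
    HasDerivAt (fun s ↦ Tmap φ z r s) (fFactor φ r θ • emb23 (deriv φ θ)) θ := by
  simp only [Tmap_eq_emb23_add_smul]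
  have hplane : HasDerivAt (fun s ↦ φ s + r • curveN φ s) (fFactor φ r θ • deriv φ θ) θ := by
    have hfactor : fFactor φ r θ • deriv φ θ =
        deriv φ θ + r • (-curveKappa φ θ • deriv φ θ) := by
      simp only [fFactor]
      module
    rw [hfactor]
    exact hφ.hasDerivAt.add (hN.const_smul r)
  rw [← emb23_smul]
  exact (hasDerivAt_emb23_comp hplane).add_const _

theorem hasDerivAt_fFactor_r : HasDerivAt (fun s ↦ fFactor φ s θ) (-curveKappa φ θ) r := by
  simpa only [fFactor, one_mul] using ((hasDerivAt_id' r).mul_const (curveKappa φ θ)).const_sub 1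

variable {v : EuclideanSpace ℝ (Fin 3) → EuclideanSpace ℝ (Fin 3)}

theorem Dz_vzComp_mul_fFactor (hv : DifferentiableAt ℝ v (Tmap φ z r θ)) :
    Dz (fun z' r' θ' ↦ vzComp φ v z' r' θ' * fFactor φ r' θ') z r θ =
      ⟪fderiv ℝ v (Tmap φ z r θ) (EuclideanSpace.single 2 1), EuclideanSpace.single 2 1⟫_ℝ *
        fFactor φ r θ := by
  have hvz := hasDerivAt_inner_vectorField_comp hasDerivAt_Tmap_z
    (hasDerivAt_const z (EuclideanSpace.single (2 : Fin 3) (1 : ℝ))) hv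
  rw [inner_zero_right, zero_add] at hvz
  exact (hvz.mul_const (fFactor φ r θ)).deriv

theorem Dr_vrComp_mul_fFactor (hv : DifferentiableAt ℝ v (Tmap φ z r θ)) :
    Dr (fun z' r' θ' ↦ vrComp φ v z' r' θ' * fFactor φ r' θ') z r θ =
      ⟪fderiv ℝ v (Tmap φ z r θ) (emb23 (curveN φ θ)), emb23 (curveN φ θ)⟫_ℝ * fFactor φ r θ -
        curveKappa φ θ * vrComp φ v z r θ := by
  have hvr := hasDerivAt_inner_vectorField_comp hasDerivAt_Tmap_r
    (hasDerivAt_const r (emb23 (curveN φ θ))) hv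
  rw [inner_zero_right, zero_add] at hvr
  refine (hvr.mul hasDerivAt_fFactor_r).deriv.trans ?_
  rw [mul_neg, ← sub_eq_add_neg, mul_comm (curveKappa φ θ), vrComp]

theorem Dθ_vθComp (hv : DifferentiableAt ℝ v (Tmap φ z r θ)) (hφ : DifferentiableAt ℝ φ θ)
    (hT : HasDerivAt (deriv φ) (curveKappa φ θ • curveN φ θ) θ)
    (hN : HasDerivAt (curveN φ) (-curveKappa φ θ • deriv φ θ) θ) :
    Dθ (vθComp φ v) z r θ =
      ⟪fderiv ℝ v (Tmap φ z r θ) (emb23 (deriv φ θ)), emb23 (deriv φ θ)⟫_ℝ * fFactor φ r θ +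
        curveKappa φ θ * vrComp φ v z r θ := by
  have hvθ := hasDerivAt_inner_vectorField_comp (hasDerivAt_Tmap_θ hφ hN)
    (hasDerivAt_emb23_comp hT) hv
  refine hvθ.deriv.trans ?_
  rw [emb23_smul, map_smul, real_inner_smul_left, real_inner_smul_right, vrComp]
  ring

theorem stmt8_general (hφ : ContDiffAt ℝ 2 φ θ) (hunit : ∀ᶠ s in 𝓝 θ, ‖deriv φ s‖ = 1)
    (hcurv : deriv (deriv φ) θ ≠ 0) (hv : DifferentiableAt ℝ v (Tmap φ z r θ))
    (hf : fFactor φ r θ ≠ 0) :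
    div3 v (Tmap φ z r θ) =
      (1 / fFactor φ r θ) *
        (Dz (fun z' r' θ' ↦ vzComp φ v z' r' θ' * fFactor φ r' θ') z r θ
          + Dr (fun z' r' θ' ↦ vrComp φ v z' r' θ' * fFactor φ r' θ') z r θ
          + Dθ (vθComp φ v) z r θ) := by
  have hT := hasDerivAt_deriv_curve hφ
  have hN := hasDerivAt_curveN hφ hunit hcurv
  have hframe := orthonormal_single_emb23 (orthonormal_deriv_curveN hT.differentiableAt hunit hcurv)
  rw [div3_eq_sum_inner_of_orthonormal hv hframe, Dz_vzComp_mul_fFactor hv,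
    Dr_vrComp_mul_fFactor hv, Dθ_vθComp hv (hφ.differentiableAt two_ne_zero) hT hN]
  simp only [Fin.sum_univ_three, Matrix.cons_val]
  field_simp
  ring

end Coordinates

/-- For a `C¹` vector field `v : ℝ³ → ℝ³`, at every `(z,r̄,θ̄)` with
`f(r̄,θ̄) ≠ 0`, the Euclidean divergence satisfies
`(div v)(T(z,r̄,θ̄)) = (1/f)·[∂_z(v_z f) + ∂_r̄(v_r̄ f) + ∂_θ̄ v_θ̄]`. -/
theorem stmt8 (δ : ℝ) (hδ : 0 < δ) (φ : ℝ → EuclideanSpace ℝ (Fin 2))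
    (hφ : ContDiffOn ℝ (⊤ : ℕ∞) φ (Set.Ioo (-δ) δ))
    (hunit : ∀ θ ∈ Set.Ioo (-δ) δ, ‖deriv φ θ‖ = 1)
    (hcurv : ∀ θ ∈ Set.Ioo (-δ) δ, deriv (deriv φ) θ ≠ 0)
    (v : EuclideanSpace ℝ (Fin 3) → EuclideanSpace ℝ (Fin 3))
    (hv : ContDiff ℝ 1 v) :
    ∀ z r : ℝ, ∀ θ ∈ Set.Ioo (-δ) δ, fFactor φ r θ ≠ 0 →
      div3 v (Tmap φ z r θ)
        = (1 / fFactor φ r θ) *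
          (Dz (fun z' r' θ' => vzComp φ v z' r' θ' * fFactor φ r' θ') z r θ
            + Dr (fun z' r' θ' => vrComp φ v z' r' θ' * fFactor φ r' θ') z r θ
            + Dθ (vθComp φ v) z r θ) := by
  intro z r θ hθ hf
  have hnhds : Set.Ioo (-δ) δ ∈ nhds θ := isOpen_Ioo.mem_nhds hθ
  exact stmt8_general (contDiffAt_infty.mp (hφ.contDiffAt hnhds) 2)
    (Filter.eventually_of_mem hnhds hunit) (hcurv θ hθ) (hv.differentiable one_ne_zero _) hf
end

section
/- Let T > 0, M > 0, N > 0. Let α, F : [0,T] → ℝ with α differentiable and F continuous, and let κ : [0,T] → ℝ be continuous with κ(t)² ≥ M² for all t ∈ [0,T]. Suppose α'(t) = κ(t)²·α(t) + F(t) for all t ∈ [0,T], and |α(0)| > T·N. Then at least one of the following holds: sup_{t∈[0,T]} |F(t)| > N, or sup_{t∈[0,T]} |α(t)| ≥ e^{M²T}·(|α(0)| − T·N). -/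
/-!
For a solution of `y' = c • y + g` in a normed space, the norm has lower right Dini derivative at
least `c * ‖y‖ - ‖g‖`, whatever the sign of `c`. Hence `-‖y‖` satisfies the hypotheses of
Grönwall's inequality, which here bounds `‖y‖` from below: if `m ≤ c` and `‖g‖ ≤ N`, then
`‖y‖` dominates the solution of `z' = m * z - N`, `z(0) = ‖y 0‖`.
-/

open Set Filter Topology

section ReverseGronwall

variable {E : Type*} [NormedAddCommGroup E] [NormedSpace ℝ E]

theorem eventually_slope_neg_norm_lt {y : ℝ → E} {c x r : ℝ} {g : E}
    (hy : HasDerivWithinAt y (c • y x + g) (Ici x) x) (hr : -(c * ‖y x‖) + ‖g‖ < r) :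
    ∀ᶠ z in 𝓝[>] x, (z - x)⁻¹ * (-‖y z‖ - -‖y x‖) < r := by
  have hslope : Tendsto (fun z => -(c * ‖y x‖) + ‖slope y x z - c • y x‖) (𝓝[>] x)
      (𝓝 (-(c * ‖y x‖) + ‖g‖)) := by
    have hlim := hasDerivWithinAt_iff_tendsto_slope' self_notMem_Ioi |>.1 hy.Ioi_of_Ici
    simpa only [add_sub_cancel_left] using ((hlim.sub_const (c • y x)).norm.const_add _)
  filter_upwards [hslope.eventually_lt_const hr, self_mem_nhdsWithin] with z hz hxz
  have hpos : 0 < z - x := sub_pos.2 hxz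
  refine lt_of_le_of_lt ?_ hz
  have hsplit : (1 + (z - x) * c) • y x = y z - (z - x) • (slope y x z - c • y x) := by
    rw [smul_sub, sub_smul_slope, vsub_eq_sub]
    module
  have hnorm : (1 + (z - x) * c) * ‖y x‖ ≤ ‖y z‖ + (z - x) * ‖slope y x z - c • y x‖ :=
    calc (1 + (z - x) * c) * ‖y x‖
        ≤ |1 + (z - x) * c| * ‖y x‖ := by gcongr; exact le_abs_self _
      _ = ‖y z - (z - x) • (slope y x z - c • y x)‖ := by
        rw [← hsplit, norm_smul, Real.norm_eq_abs]
      _ ≤ ‖y z‖ + (z - x) * ‖slope y x z - c • y x‖ :=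
        (norm_sub_le _ _).trans_eq (by rw [norm_smul, Real.norm_of_nonneg hpos.le])
  rw [inv_mul_le_iff₀ hpos]
  linarith

theorem neg_norm_le_gronwallBound {y g : ℝ → E} {c : ℝ → ℝ} {a b m N : ℝ}
    (hy : ContinuousOn y (Icc a b))
    (hy' : ∀ t ∈ Ico a b, HasDerivWithinAt y (c t • y t + g t) (Ici t) t)
    (hc : ∀ t ∈ Ico a b, m ≤ c t) (hg : ∀ t ∈ Ico a b, ‖g t‖ ≤ N) :
    ∀ t ∈ Icc a b, -‖y t‖ ≤ gronwallBound (-‖y a‖) m N (t - a) := by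
  refine le_gronwallBound_of_liminf_deriv_right_le hy.norm.neg
    (fun t ht r hr => (eventually_slope_neg_norm_lt (hy' t ht) hr).frequently)
    le_rfl fun t ht => ?_
  rw [mul_neg]
  gcongr
  exacts [hc t ht, hg t ht]

end ReverseGronwall

theorem gronwallBound_le_exp_mul {δ K ε x : ℝ} (hK : 0 ≤ K) (hε : 0 ≤ ε) :
    gronwallBound δ K ε x ≤ Real.exp (K * x) * (δ + x * ε) := by
  rcases hK.eq_or_lt with rfl | hK
  · simp [gronwallBound_K0, mul_comm]
  · have hexp : Real.exp (K * x) - 1 ≤ Real.exp (K * x) * (K * x) := by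
      have h := mul_le_mul_of_nonneg_left (Real.one_sub_le_exp_neg (K * x))
        (Real.exp_pos (K * x)).le
      rw [← Real.exp_add, add_neg_cancel, Real.exp_zero] at h
      linarith
    calc gronwallBound δ K ε x
        = δ * Real.exp (K * x) + ε / K * (Real.exp (K * x) - 1) := by
          rw [gronwallBound_of_K_ne_0 hK.ne']
      _ ≤ δ * Real.exp (K * x) + ε / K * (Real.exp (K * x) * (K * x)) := by gcongr
      _ = Real.exp (K * x) * (δ + x * ε) := by field_simp

theorem stmt13_general {E : Type*} [NormedAddCommGroup E] [NormedSpace ℝ E]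
    {T m N : ℝ} (hT : 0 ≤ T) (hm : 0 ≤ m) {α F : ℝ → E} {k : ℝ → ℝ}
    (hα : ∀ t ∈ Icc 0 T, HasDerivWithinAt α (k t • α t + F t) (Icc 0 T) t)
    (hk : ∀ t ∈ Icc 0 T, m ≤ k t) :
    (∃ t ∈ Icc 0 T, N < ‖F t‖) ∨ Real.exp (m * T) * (‖α 0‖ - T * N) ≤ ‖α T‖ := by
  rw [or_iff_not_imp_left]
  intro hF
  push Not at hF
  have hN : 0 ≤ N := (norm_nonneg _).trans (hF 0 (left_mem_Icc.2 hT))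
  have hlower : -‖α T‖ ≤ gronwallBound (-‖α 0‖) m N (T - 0) :=
    neg_norm_le_gronwallBound (fun t ht => (hα t ht).continuousWithinAt)
      (fun t ht => (hα t (Ico_subset_Icc_self ht)).mono_of_mem_nhdsWithin
        (Icc_mem_nhdsGE_of_mem ht))
      (fun t ht => hk t (Ico_subset_Icc_self ht)) (fun t ht => hF t (Ico_subset_Icc_self ht))
      T (right_mem_Icc.2 hT)
  have hupper := gronwallBound_le_exp_mul (δ := -‖α 0‖) (x := T) hm hN
  rw [sub_zero] at hlower
  linarith

/-- (ODE form of the main theorem.)  Let `T, M, N > 0`, let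
`α : [0,T] → ℝ` be differentiable, `F` continuous, and `κ` continuous with
`κ(t)² ≥ M²`, with `α' = κ²·α + F` on `[0,T]` and `|α(0)| > T·N`.  Then either
`sup_{[0,T]} |F| > N`, or `sup_{[0,T]} |α| ≥ e^{M²T}·(|α(0)| − T·N)`. -/
theorem stmt13 (T M N : ℝ) (hT : 0 < T) (hM : 0 < M) (hN : 0 < N)
    (α F κ : ℝ → ℝ)
    (hα : ∀ t ∈ Set.Icc 0 T,
      HasDerivWithinAt α (κ t ^ 2 * α t + F t) (Set.Icc 0 T) t)
    (hF : ContinuousOn F (Set.Icc 0 T))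
    (hκ : ContinuousOn κ (Set.Icc 0 T))
    (hκM : ∀ t ∈ Set.Icc 0 T, M ^ 2 ≤ κ t ^ 2)
    (h0 : |α 0| > T * N) :
    N < sSup ((fun t => |F t|) '' Set.Icc 0 T) ∨
    Real.exp (M ^ 2 * T) * (|α 0| - T * N) ≤ sSup ((fun t => |α t|) '' Set.Icc 0 T) := by
  have hα_cont : ContinuousOn α (Icc 0 T) := fun t ht => (hα t ht).continuousWithinAt
  exact (stmt13_general hT.le (sq_nonneg M) hα hκM).imp
    (fun ⟨_, ht, hlt⟩ => hlt.trans_le (hF.abs.le_sSup_image_Icc ht))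
    (·.trans (hα_cont.abs.le_sSup_image_Icc (right_mem_Icc.2 hT.le)))
end
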